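/- arXiv:2604.07148 — 3 statements merged into one kernel-verified Lean document; each statement's English description precedes it below -/
import Mathlib

section
/- Let π (old policy) and π' (new policy) be two policies in the finite discounted MDP setup, and assume π(s,a) > 0 for every state s and action a. Let Amax = max over all (s,a) of |Aπ(s,a)| and let B = (2·η·Amax/(1−η)²)·√(1/2). Then V(π') ≥ V(π) + (1/(1−η))·∑_s dπ(s)·∑_a π'(s,a)·Aπ(s,a) − B·max_s √(KL(π'(s,·) ‖ π(s,·))). -/
open scoped BigOperators

/-- Induced transition matrix of a policy. -/
noncomputable def Mmat {S A : Type*} [Fintype A] (P : S → A → S → ℝ) (π : S → A → ℝ) :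
    Matrix S S ℝ :=
  fun s s' => ∑ a, π s a * P s a s'

/-- Induced reward vector of a policy. -/
noncomputable def rvec {S A : Type*} [Fintype A] (r : S → A → ℝ) (π : S → A → ℝ) : S → ℝ :=
  fun s => ∑ a, π s a * r s a

/-- Value function: Vπ(s) = ∑_{t=0}^∞ η^t (Mπ^t rπ)(s). -/
noncomputable def Vval {S A : Type*} [Fintype S] [DecidableEq S] [Fintype A] (P : S → A → S → ℝ)
    (r : S → A → ℝ) (η : ℝ) (π : S → A → ℝ) : S → ℝ :=
  fun s => ∑' t : ℕ, η ^ t * ((Mmat P π ^ t).mulVec (rvec r π)) s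

/-- State-action value Qπ(s,a) = r(s,a) + η ∑_{s'} P(s,a,s') Vπ(s'). -/
noncomputable def Qval {S A : Type*} [Fintype S] [DecidableEq S] [Fintype A] (P : S → A → S → ℝ)
    (r : S → A → ℝ) (η : ℝ) (π : S → A → ℝ) : S → A → ℝ :=
  fun s a => r s a + η * ∑ s', P s a s' * Vval P r η π s'

/-- Advantage Aπ(s,a) = Qπ(s,a) − Vπ(s). -/
noncomputable def Adv {S A : Type*} [Fintype S] [DecidableEq S] [Fintype A] (P : S → A → S → ℝ)
    (r : S → A → ℝ) (η : ℝ) (π : S → A → ℝ) : S → A → ℝ :=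
  fun s a => Qval P r η π s a - Vval P r η π s

/-- Discounted state visitation distribution dπ(s) = (1−η) ∑_{t} η^t (μ Mπ^t)(s). -/
noncomputable def dvisit {S A : Type*} [Fintype S] [DecidableEq S] [Fintype A] (P : S → A → S → ℝ)
    (η : ℝ) (π : S → A → ℝ) (μ : S → ℝ) : S → ℝ :=
  fun s => (1 - η) * ∑' t : ℕ, η ^ t * (Matrix.vecMul μ (Mmat P π ^ t)) s

/-- Total variation distance between probability vectors on a finite type. -/
noncomputable def TV {α : Type*} [Fintype α] (p q : α → ℝ) : ℝ :=
  (1 / 2) * ∑ a, |p a - q a|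

/-- KL divergence (for q everywhere positive; terms with p a = 0 contribute 0). -/
noncomputable def KL {α : Type*} [Fintype α] (p q : α → ℝ) : ℝ :=
  ∑ a, p a * Real.log (p a / q a)

/-- The rational lower bound on the logarithm behind Pinsker's inequality. -/
theorem rational_le_log {x : ℝ} (hx : 0 < x) :
    (x - 1) * (5 * x + 1) / (2 * x * (x + 2)) ≤ Real.log x := by
  set f : ℝ → ℝ := fun y => Real.log y - (y - 1) * (5 * y + 1) / (2 * y * (y + 2)) with hf
  have hderiv : ∀ y : ℝ, 0 < y → HasDerivAt f ((y - 1) ^ 3 / (y ^ 2 * (y + 2) ^ 2)) y := by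
    intro y hy
    have hnum : HasDerivAt (fun z : ℝ => (z - 1) * (5 * z + 1))
        (1 * (5 * y + 1) + (y - 1) * (5 * 1)) y :=
      ((hasDerivAt_id y).sub_const 1).mul (((hasDerivAt_id y).const_mul 5).add_const 1)
    have hden : HasDerivAt (fun z : ℝ => 2 * z * (z + 2)) (2 * 1 * (y + 2) + 2 * y * 1) y :=
      ((hasDerivAt_id y).const_mul 2).mul ((hasDerivAt_id y).add_const 2)
    refine ((Real.hasDerivAt_log hy.ne').sub (hnum.div hden (by positivity))).congr_deriv ?_
    field_simp
    ring
  have hone : f 1 = 0 := by simp [hf]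
  suffices 0 ≤ f x by simpa [hf] using this
  rw [← hone]
  rcases le_total x 1 with h | h
  · have hanti : AntitoneOn f (Set.Icc x 1) := by
      refine antitoneOn_of_deriv_nonpos (convex_Icc x 1)
        (fun y hy => (hderiv y (hx.trans_le hy.1)).continuousAt.continuousWithinAt)
        (fun y hy => ?_) (fun y hy => ?_) <;> rw [interior_Icc] at hy
      · exact (hderiv y (hx.trans hy.1)).differentiableAt.differentiableWithinAt
      · rw [(hderiv y (hx.trans hy.1)).deriv]
        have : (y - 1) ^ 3 ≤ 0 := Odd.pow_nonpos (by decide) (by linarith [hy.2])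
        exact div_nonpos_of_nonpos_of_nonneg this (by positivity)
    exact hanti ⟨le_rfl, h⟩ ⟨h, le_rfl⟩ h
  · have hmono : MonotoneOn f (Set.Icc 1 x) := by
      refine monotoneOn_of_deriv_nonneg (convex_Icc 1 x)
        (fun y hy => (hderiv y (one_pos.trans_le hy.1)).continuousAt.continuousWithinAt)
        (fun y hy => ?_) (fun y hy => ?_) <;> rw [interior_Icc] at hy
      · exact (hderiv y (one_pos.trans hy.1)).differentiableAt.differentiableWithinAt
      · rw [(hderiv y (one_pos.trans hy.1)).deriv]
        have : 0 ≤ y - 1 := by linarith [hy.1]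
        positivity
    exact hmono ⟨le_rfl, h⟩ ⟨h, le_rfl⟩ h

theorem sq_sub_div_le_mul_log {p q : ℝ} (hp : 0 ≤ p) (hq : 0 < q) :
    (p - q) ^ 2 / ((2 * p + 4 * q) / 3) ≤ p * Real.log (p / q) - p + q := by
  rcases hp.eq_or_lt with rfl | hp
  · rw [div_le_iff₀ (by positivity)]
    simp
    nlinarith [sq_nonneg q]
  · have h := mul_le_mul_of_nonneg_left (rational_le_log (div_pos hp hq)) hp.le
    refine le_trans (le_of_eq ?_) (add_le_add_left (add_le_add_left h (-p)) q)
    field_simp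
    ring

/-- Pinsker's inequality for probability vectors on a finite type. -/
theorem sum_abs_sub_le_two_mul_sqrt_KL {α : Type*} [Fintype α] {p q : α → ℝ}
    (hp0 : ∀ a, 0 ≤ p a) (hp1 : ∑ a, p a = 1) (hq0 : ∀ a, 0 < q a) (hq1 : ∑ a, q a = 1) :
    ∑ a, |p a - q a| ≤ 2 * (√(1 / 2) * √(KL p q)) := by
  have hpos : ∀ a, 0 < (2 * p a + 4 * q a) / 3 := fun a => by
    have := hp0 a
    have := hq0 a
    positivity
  have hcs : (∑ a, |p a - q a|) ^ 2 / ∑ a, (2 * p a + 4 * q a) / 3 ≤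
      ∑ a, |p a - q a| ^ 2 / ((2 * p a + 4 * q a) / 3) :=
    Finset.sq_sum_div_le_sum_sq_div _ _ fun a _ => hpos a
  have hsum : ∑ a, (2 * p a + 4 * q a) / 3 = 2 := by
    rw [← Finset.sum_div, Finset.sum_add_distrib, ← Finset.mul_sum, ← Finset.mul_sum, hp1, hq1]
    norm_num
  have hle : ∑ a, |p a - q a| ^ 2 / ((2 * p a + 4 * q a) / 3) ≤ KL p q := by
    calc _ ≤ ∑ a, (p a * Real.log (p a / q a) - p a + q a) :=
          Finset.sum_le_sum fun a _ => by
            rw [sq_abs]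
            exact sq_sub_div_le_mul_log (hp0 a) (hq0 a)
      _ = KL p q := by
          rw [Finset.sum_add_distrib, Finset.sum_sub_distrib, hp1, hq1, KL]
          ring
  rw [hsum] at hcs
  rw [← Real.sqrt_mul (by norm_num)]
  have hroot : ∑ a, |p a - q a| ≤ √(4 * (1 / 2 * KL p q)) := Real.le_sqrt_of_sq_le (by linarith)
  rwa [Real.sqrt_mul (by norm_num), show (4 : ℝ) = 2 ^ 2 by norm_num,
    Real.sqrt_sq (by norm_num)] at hroot

section Stochastic

variable {S : Type*} [Fintype S] {M : Matrix S S ℝ}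

theorem norm_mulVec_le_of_stochastic (hM0 : ∀ i j, 0 ≤ M i j) (hM1 : ∀ i, ∑ j, M i j = 1)
    (v : S → ℝ) : ‖M.mulVec v‖ ≤ ‖v‖ := by
  refine (pi_norm_le_iff_of_nonneg (norm_nonneg v)).2 fun i => ?_
  calc ‖M.mulVec v i‖ ≤ ∑ j, ‖M i j * v j‖ := norm_sum_le _ _
    _ ≤ ∑ j, M i j * ‖v‖ := Finset.sum_le_sum fun j _ => by
        rw [norm_mul, Real.norm_of_nonneg (hM0 i j)]
        exact mul_le_mul_of_nonneg_left (norm_le_pi_norm v j) (hM0 i j)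
    _ = ‖v‖ := by rw [← Finset.sum_mul, hM1, one_mul]

/-- A solution of a discounted Poisson equation is bounded by its source term. -/
theorem norm_le_of_eq_add_smul_mulVec (hM0 : ∀ i j, 0 ≤ M i j) (hM1 : ∀ i, ∑ j, M i j = 1)
    {η : ℝ} (hη0 : 0 ≤ η) (hη1 : η < 1) {x v : S → ℝ} (h : x = v + η • M.mulVec x) :
    ‖x‖ ≤ ‖v‖ / (1 - η) := by
  have hx : ‖x‖ ≤ ‖v‖ + η * ‖x‖ := by
    calc ‖x‖ = ‖v + η • M.mulVec x‖ := congrArg norm h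
      _ ≤ ‖v‖ + ‖η • M.mulVec x‖ := norm_add_le _ _
      _ ≤ ‖v‖ + η * ‖x‖ := by
          rw [norm_smul, Real.norm_of_nonneg hη0]
          gcongr
          exact norm_mulVec_le_of_stochastic hM0 hM1 x
  rw [le_div_iff₀ (by linarith)]
  linarith

variable [DecidableEq S]

theorem norm_pow_mulVec_le_of_stochastic (hM0 : ∀ i j, 0 ≤ M i j) (hM1 : ∀ i, ∑ j, M i j = 1)
    (v : S → ℝ) (t : ℕ) : ‖(M ^ t).mulVec v‖ ≤ ‖v‖ := by
  induction t with
  | zero => simp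
  | succ t ih =>
    rw [pow_succ', ← Matrix.mulVec_mulVec]
    exact (norm_mulVec_le_of_stochastic hM0 hM1 _).trans ih

theorem summable_discounted_pow_mulVec (hM0 : ∀ i j, 0 ≤ M i j) (hM1 : ∀ i, ∑ j, M i j = 1)
    {η : ℝ} (hη0 : 0 ≤ η) (hη1 : η < 1) (v : S → ℝ) (i : S) :
    Summable fun t : ℕ => η ^ t * (M ^ t).mulVec v i := by
  refine .of_norm_bounded ((summable_geometric_of_lt_one hη0 hη1).mul_right ‖v‖) fun t => ?_
  rw [norm_mul, Real.norm_of_nonneg (pow_nonneg hη0 t)]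
  gcongr
  exact (norm_le_pi_norm _ i).trans (norm_pow_mulVec_le_of_stochastic hM0 hM1 v t)

theorem tsum_discounted_pow_mulVec_eq (hM0 : ∀ i j, 0 ≤ M i j) (hM1 : ∀ i, ∑ j, M i j = 1)
    {η : ℝ} (hη0 : 0 ≤ η) (hη1 : η < 1) (v : S → ℝ) :
    (fun i => ∑' t : ℕ, η ^ t * (M ^ t).mulVec v i) =
      v + η • M.mulVec fun i => ∑' t : ℕ, η ^ t * (M ^ t).mulVec v i := by
  have hs := summable_discounted_pow_mulVec hM0 hM1 hη0 hη1 v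
  funext i
  rw [(hs i).tsum_eq_zero_add]
  simp only [pow_zero, one_mul, Matrix.one_mulVec, Pi.add_apply, Pi.smul_apply, smul_eq_mul]
  congr 1
  have hsucc : ∀ t : ℕ, η ^ (t + 1) * (M ^ (t + 1)).mulVec v i =
      η * ∑ j, M i j * (η ^ t * (M ^ t).mulVec v j) := fun t => by
    rw [pow_succ' M, ← Matrix.mulVec_mulVec]
    change _ * ∑ j, M i j * (M ^ t).mulVec v j = _
    rw [Finset.mul_sum, Finset.mul_sum]
    exact Finset.sum_congr rfl fun j _ => by ring
  rw [tsum_congr hsucc, tsum_mul_left,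
    Summable.tsum_finsetSum fun j _ => (hs j).mul_left (M i j)]
  simp only [tsum_mul_left]
  rfl

theorem sum_mul_tsum_discounted_pow_mulVec (hM0 : ∀ i j, 0 ≤ M i j)
    (hM1 : ∀ i, ∑ j, M i j = 1) {η : ℝ} (hη0 : 0 ≤ η) (hη1 : η < 1) (μ v : S → ℝ) :
    ∑ i, μ i * ∑' t : ℕ, η ^ t * (M ^ t).mulVec v i =
      ∑ i, (∑' t : ℕ, η ^ t * Matrix.vecMul μ (M ^ t) i) * v i := by
  have hs := summable_discounted_pow_mulVec hM0 hM1 hη0 hη1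
  have hvec : ∀ i, Summable fun t : ℕ => η ^ t * Matrix.vecMul μ (M ^ t) i := fun i => by
    refine (summable_sum fun j (_ : j ∈ Finset.univ) =>
      (hs (Pi.single i 1) j).mul_left (μ j)).congr fun t => ?_
    simp only [Matrix.mulVec_single_one, Matrix.col_apply, Matrix.vecMul, dotProduct,
      Finset.mul_sum]
    exact Finset.sum_congr rfl fun j _ => by ring
  simp only [← tsum_mul_left, ← tsum_mul_right]
  rw [← Summable.tsum_finsetSum fun i _ => (hs v i).mul_left (μ i),
    ← Summable.tsum_finsetSum fun i _ => (hvec i).mul_right (v i)]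
  refine tsum_congr fun t => ?_
  have := Matrix.dotProduct_mulVec μ (M ^ t) v
  simp only [dotProduct] at this
  simp only [mul_assoc, mul_left_comm (μ _), ← Finset.mul_sum, this]

end Stochastic

section Policy

variable {S A : Type*} {P : S → A → S → ℝ}

theorem Mmat_nonneg [Fintype A] (hP0 : ∀ s a s', 0 ≤ P s a s') {π : S → A → ℝ} (hπ0 : ∀ s a, 0 ≤ π s a)
    (s s' : S) : 0 ≤ Mmat P π s s' :=
  Finset.sum_nonneg fun a _ => mul_nonneg (hπ0 s a) (hP0 s a s')

theorem abs_sum_transition_mul_le [Fintype S] (hP0 : ∀ s a s', 0 ≤ P s a s')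
    (hP1 : ∀ s a, ∑ s', P s a s' = 1) (v : S → ℝ) (s : S) (a : A) :
    |∑ s', P s a s' * v s'| ≤ ‖v‖ := by
  calc |∑ s', P s a s' * v s'| ≤ ∑ s', |P s a s' * v s'| := Finset.abs_sum_le_sum_abs _ _
    _ ≤ ∑ s', P s a s' * ‖v‖ := Finset.sum_le_sum fun s' _ => by
        rw [abs_mul, abs_of_nonneg (hP0 s a s')]
        exact mul_le_mul_of_nonneg_left (norm_le_pi_norm v s') (hP0 s a s')
    _ = ‖v‖ := by rw [← Finset.sum_mul, hP1, one_mul]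

variable [Fintype S] [Fintype A]

theorem Mmat_mulVec (P : S → A → S → ℝ) (π : S → A → ℝ) (v : S → ℝ) (s : S) :
    (Mmat P π).mulVec v s = ∑ a, π s a * ∑ s', P s a s' * v s' := by
  simp only [Matrix.mulVec, dotProduct, Mmat, Finset.sum_mul, Finset.mul_sum]
  rw [Finset.sum_comm]
  simp only [mul_assoc]

theorem sum_Mmat (hP1 : ∀ s a, ∑ s', P s a s' = 1) {π : S → A → ℝ} (hπ1 : ∀ s, ∑ a, π s a = 1)
    (s : S) : ∑ s', Mmat P π s s' = 1 := by
  have h := Mmat_mulVec P π (fun _ => 1) s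
  simpa [Matrix.mulVec, dotProduct, hP1, hπ1] using h

/-- The induced transition matrices of two policies differ by at most their `ℓ¹` distance. -/
theorem norm_Mmat_mulVec_sub_le (hP0 : ∀ s a s', 0 ≤ P s a s')
    (hP1 : ∀ s a, ∑ s', P s a s' = 1) {π π' : S → A → ℝ} {c : ℝ} (hc : 0 ≤ c)
    (h : ∀ s, ∑ a, |π' s a - π s a| ≤ c) (v : S → ℝ) :
    ‖(Mmat P π').mulVec v - (Mmat P π).mulVec v‖ ≤ c * ‖v‖ := by
  refine (pi_norm_le_iff_of_nonneg (by positivity)).2 fun s => ?_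
  rw [Pi.sub_apply, Mmat_mulVec, Mmat_mulVec, ← Finset.sum_sub_distrib, Real.norm_eq_abs]
  simp only [← sub_mul]
  calc _ ≤ ∑ a, |(π' s a - π s a) * ∑ s', P s a s' * v s'| := Finset.abs_sum_le_sum_abs _ _
    _ ≤ ∑ a, |π' s a - π s a| * ‖v‖ := Finset.sum_le_sum fun a _ => by
        rw [abs_mul]
        gcongr
        exact abs_sum_transition_mul_le hP0 hP1 v s a
    _ ≤ c * ‖v‖ := by
        rw [← Finset.sum_mul]
        gcongr
        exact h s

theorem sum_policy_mul_Adv [DecidableEq S] (P : S → A → S → ℝ) (r : S → A → ℝ) (η : ℝ)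
    (π : S → A → ℝ) {π' : S → A → ℝ} (hπ'1 : ∀ s, ∑ a, π' s a = 1) :
    (fun s => ∑ a, π' s a * Adv P r η π s a) =
      rvec r π' + η • (Mmat P π').mulVec (Vval P r η π) - Vval P r η π := by
  funext s
  simp only [Adv, Qval, mul_sub, mul_add, Finset.sum_sub_distrib, Finset.sum_add_distrib,
    Pi.add_apply, Pi.sub_apply, Pi.smul_apply, smul_eq_mul, Mmat_mulVec, rvec,
    ← Finset.sum_mul, hπ'1, one_mul, mul_left_comm _ η, ← Finset.mul_sum _ _ η]

/-- The visitation distribution represents discounted sums started from `μ`. -/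
theorem sum_dvisit_mul [DecidableEq S] (hP0 : ∀ s a s', 0 ≤ P s a s')
    (hP1 : ∀ s a, ∑ s', P s a s' = 1) {η : ℝ} (hη0 : 0 ≤ η) (hη1 : η < 1) {π : S → A → ℝ}
    (hπ0 : ∀ s a, 0 ≤ π s a) (hπ1 : ∀ s, ∑ a, π s a = 1) (μ v : S → ℝ) :
    1 / (1 - η) * ∑ s, dvisit P η π μ s * v s =
      ∑ s, μ s * ∑' t : ℕ, η ^ t * (Mmat P π ^ t).mulVec v s := by
  rw [sum_mul_tsum_discounted_pow_mulVec (Mmat_nonneg hP0 hπ0) (sum_Mmat hP1 hπ1) hη0 hη1]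
  have : 1 - η ≠ 0 := by linarith
  simp only [dvisit, mul_assoc, ← Finset.mul_sum]
  field_simp

end Policy

/-- Performance lower bound for the updated policy (GRPO-style bound). -/
theorem performance_lower_bound
    {S A : Type*} [Fintype S] [DecidableEq S] [Fintype A] [Nonempty S] [Nonempty A]
    (P : S → A → S → ℝ) (hP0 : ∀ s a s', 0 ≤ P s a s') (hP1 : ∀ s a, ∑ s', P s a s' = 1)
    (r : S → A → ℝ) (Rmax : ℝ) (hRmax : 0 ≤ Rmax) (hr : ∀ s a, |r s a| ≤ Rmax)
    (η : ℝ) (hη0 : 0 < η) (hη1 : η < 1)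
    (π π' : S → A → ℝ)
    (hπ0 : ∀ s a, 0 ≤ π s a) (hπ1 : ∀ s, ∑ a, π s a = 1)
    (hπ'0 : ∀ s a, 0 ≤ π' s a) (hπ'1 : ∀ s, ∑ a, π' s a = 1)
    (hπpos : ∀ s a, 0 < π s a)
    (μ : S → ℝ) (hμ0 : ∀ s, 0 ≤ μ s) (hμ1 : ∑ s, μ s = 1)
    (Amax B : ℝ)
    (hAmax : Amax = Finset.univ.sup' Finset.univ_nonempty
      (fun p : S × A => |Adv P r η π p.1 p.2|))
    (hB : B = (2 * η * Amax / (1 - η) ^ 2) * Real.sqrt (1 / 2)) :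
    ∑ s, μ s * Vval P r η π' s ≥
      ∑ s, μ s * Vval P r η π s
        + (1 / (1 - η)) * ∑ s, dvisit P η π μ s * ∑ a, π' s a * Adv P r η π s a
        - B * Finset.univ.sup' Finset.univ_nonempty
            (fun s => Real.sqrt (KL (fun a => π' s a) (fun a => π s a))) := by
  have hM0 := Mmat_nonneg hP0 hπ0
  have hM1 := sum_Mmat hP1 hπ1
  have hM'0 := Mmat_nonneg hP0 hπ'0
  have hM'1 := sum_Mmat hP1 hπ'1
  set κ := Finset.univ.sup' Finset.univ_nonempty
    (fun s => Real.sqrt (KL (fun a => π' s a) (fun a => π s a)))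
  set g : S → ℝ := fun s => ∑ a, π' s a * Adv P r η π s a
  have hgeq : g = rvec r π' + η • (Mmat P π').mulVec (Vval P r η π) - Vval P r η π :=
    sum_policy_mul_Adv P r η π hπ'1
  have hAdv : ∀ s a, |Adv P r η π s a| ≤ Amax := fun s a => by
    rw [hAmax]
    exact Finset.le_sup' (fun p : S × A => |Adv P r η π p.1 p.2|) (Finset.mem_univ (s, a))
  have hAmax0 : 0 ≤ Amax :=
    (abs_nonneg _).trans (hAdv (Classical.arbitrary S) (Classical.arbitrary A))
  have hgnorm : ‖g‖ ≤ Amax := by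
    refine (pi_norm_le_iff_of_nonneg hAmax0).2 fun s => ?_
    calc ‖g s‖ ≤ ∑ a, ‖π' s a * Adv P r η π s a‖ := norm_sum_le _ _
      _ ≤ ∑ a, π' s a * Amax := Finset.sum_le_sum fun a _ => by
          rw [norm_mul, Real.norm_of_nonneg (hπ'0 s a)]
          exact mul_le_mul_of_nonneg_left (hAdv s a) (hπ'0 s a)
      _ = Amax := by rw [← Finset.sum_mul, hπ'1, one_mul]
  have hκ : ∀ s, √(KL (fun a => π' s a) (fun a => π s a)) ≤ κ := fun s =>
    Finset.le_sup' (fun s => √(KL (fun a => π' s a) (fun a => π s a))) (Finset.mem_univ s)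
  have hκ0 : 0 ≤ κ := (Real.sqrt_nonneg _).trans (hκ (Classical.arbitrary S))
  have hℓ : ∀ s, ∑ a, |π' s a - π s a| ≤ 2 * (√(1 / 2) * κ) := fun s =>
    (sum_abs_sub_le_two_mul_sqrt_KL (hπ'0 s) (hπ'1 s) (hπpos s) (hπ1 s)).trans
      (by gcongr; exact hκ s)
  have hV' : Vval P r η π' = rvec r π' + η • (Mmat P π').mulVec (Vval P r η π') :=
    tsum_discounted_pow_mulVec_eq hM'0 hM'1 hη0.le hη1 _
  set x : S → ℝ := Vval P r η π' - Vval P r η π with hx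
  have hxeq : x = g + η • (Mmat P π').mulVec x := by
    rw [hgeq, hx, Matrix.mulVec_sub, smul_sub]
    nth_rewrite 1 [hV']
    abel
  have hxnorm : ‖x‖ ≤ Amax / (1 - η) :=
    (norm_le_of_eq_add_smul_mulVec hM'0 hM'1 hη0.le hη1 hxeq).trans
      (div_le_div_of_nonneg_right hgnorm (by linarith))
  clear_value x
  set y : S → ℝ := fun s => ∑' t : ℕ, η ^ t * (Mmat P π ^ t).mulVec g s with hy
  have hyeq : y = g + η • (Mmat P π).mulVec y :=
    tsum_discounted_pow_mulVec_eq hM0 hM1 hη0.le hη1 g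
  have hdiff : y - x = η • ((Mmat P π).mulVec x - (Mmat P π').mulVec x) +
      η • (Mmat P π).mulVec (y - x) := by
    refine (congrArg₂ (· - ·) hyeq hxeq).trans ?_
    rw [Matrix.mulVec_sub, smul_sub, smul_sub]
    abel
  have hbound : ‖y - x‖ ≤ B * κ := by
    calc ‖y - x‖ ≤ ‖η • ((Mmat P π).mulVec x - (Mmat P π').mulVec x)‖ / (1 - η) :=
          norm_le_of_eq_add_smul_mulVec hM0 hM1 hη0.le hη1 hdiff
      _ ≤ η * (2 * (√(1 / 2) * κ) * (Amax / (1 - η))) / (1 - η) := by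
          rw [norm_smul, Real.norm_of_nonneg hη0.le, norm_sub_rev]
          have : 0 ≤ 1 - η := by linarith
          gcongr
          exact (norm_Mmat_mulVec_sub_le hP0 hP1 (by positivity) hℓ x).trans (by gcongr)
      _ = B * κ := by
          have : 1 - η ≠ 0 := by linarith
          rw [hB]
          field_simp
  have hμ : ∑ s, μ s * (y - x) s ≤ B * κ := by
    calc ∑ s, μ s * (y - x) s ≤ ∑ s, μ s * (B * κ) := Finset.sum_le_sum fun s _ =>
          mul_le_mul_of_nonneg_left
            (((le_abs_self _).trans (norm_le_pi_norm (y - x) s)).trans hbound) (hμ0 s)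
      _ = B * κ := by rw [← Finset.sum_mul, hμ1, one_mul]
  rw [sum_dvisit_mul hP0 hP1 hη0.le hη1 hπ0 hπ1 μ g]
  simp only [hx, hy, Pi.sub_apply, mul_sub, Finset.sum_sub_distrib] at hμ
  linarith
end

section
/- Performance difference identity: for any two policies π and π' in the finite discounted MDP setup, V(π') − V(π) = (1/(1−η))·∑_s dπ'(s)·∑_a π'(s,a)·Aπ(s,a), where dπ' is the discounted state visitation distribution of the new policy π' and Aπ is the advantage function of the old policy π. -/
open scoped BigOperators

/-- The transition matrix induced by a policy is row stochastic. -/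
theorem Mmat_mem_rowStochastic {S A : Type*} [Fintype S] [DecidableEq S] [Fintype A]
    {P : S → A → S → ℝ} (hP0 : ∀ s a s', 0 ≤ P s a s') (hP1 : ∀ s a, ∑ s', P s a s' = 1)
    {π : S → A → ℝ} (hπ0 : ∀ s a, 0 ≤ π s a) (hπ1 : ∀ s, ∑ a, π s a = 1) :
    Mmat P π ∈ Matrix.rowStochastic ℝ S := by
  rw [Matrix.mem_rowStochastic_iff_sum]
  refine ⟨fun s s' => Finset.sum_nonneg fun a _ => mul_nonneg (hπ0 s a) (hP0 s a s'), fun s => ?_⟩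
  simp only [Mmat]
  rw [Finset.sum_comm]
  simp [← Finset.mul_sum, hP1, hπ1]

/-- The entries of the resolvent series of a row stochastic matrix are summable. -/
theorem summable_pow_mul_pow_apply {S : Type*} [Fintype S] [DecidableEq S] {M : Matrix S S ℝ}
    (hM : M ∈ Matrix.rowStochastic ℝ S) {η : ℝ} (hη0 : 0 ≤ η) (hη1 : η < 1) (i j : S) :
    Summable fun t : ℕ => η ^ t * (M ^ t) i j := by
  have hpow (t : ℕ) : M ^ t ∈ Matrix.rowStochastic ℝ S := pow_mem hM t
  refine Summable.of_nonneg_of_le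
    (fun t => mul_nonneg (pow_nonneg hη0 t) (Matrix.nonneg_of_mem_rowStochastic (hpow t)))
    (fun t => ?_) (summable_geometric_of_lt_one hη0 hη1)
  exact mul_le_of_le_one_right (pow_nonneg hη0 t) (Matrix.le_one_of_mem_rowStochastic (hpow t))

/-- The entrywise resolvent `∑ η ^ t M ^ t` of a square matrix. -/
noncomputable def resolventSeries {S : Type*} [Fintype S] [DecidableEq S] (M : Matrix S S ℝ)
    (η : ℝ) : Matrix S S ℝ :=
  fun i j => ∑' t : ℕ, η ^ t * (M ^ t) i j

theorem resolventSeries_mul_one_sub {S : Type*} [Fintype S] [DecidableEq S] {M : Matrix S S ℝ}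
    {η : ℝ} (hs : ∀ i j, Summable fun t : ℕ => η ^ t * (M ^ t) i j) :
    resolventSeries M η * (1 - η • M) = 1 := by
  rw [mul_sub, mul_one, sub_eq_iff_eq_add]
  ext i j
  have hterm (t : ℕ) :
      η ^ (t + 1) * (M ^ (t + 1)) i j = ∑ k, η ^ t * (M ^ t) i k * (η * M k j) := by
    rw [pow_succ M, Matrix.mul_apply, Finset.mul_sum]
    exact Finset.sum_congr rfl fun k _ => by ring
  simp only [resolventSeries, Matrix.add_apply, Matrix.mul_apply, Matrix.smul_apply, smul_eq_mul]
  rw [(hs i j).tsum_eq_zero_add]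
  simp only [hterm]
  rw [Summable.tsum_finsetSum fun k _ => (hs i k).mul_right _]
  simp [tsum_mul_right]

theorem tsum_pow_mul_mulVec {S : Type*} [Fintype S] [DecidableEq S] {M : Matrix S S ℝ}
    {η : ℝ} (hs : ∀ i j, Summable fun t : ℕ => η ^ t * (M ^ t) i j) (v : S → ℝ) (s : S) :
    ∑' t : ℕ, η ^ t * ((M ^ t).mulVec v) s = (resolventSeries M η).mulVec v s := by
  simp only [Matrix.mulVec, dotProduct, resolventSeries, Finset.mul_sum, ← mul_assoc]
  rw [Summable.tsum_finsetSum fun k _ => (hs s k).mul_right _]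
  simp [tsum_mul_right]

theorem tsum_pow_mul_vecMul {S : Type*} [Fintype S] [DecidableEq S] {M : Matrix S S ℝ}
    {η : ℝ} (hs : ∀ i j, Summable fun t : ℕ => η ^ t * (M ^ t) i j) (μ : S → ℝ) (s : S) :
    ∑' t : ℕ, η ^ t * (Matrix.vecMul μ (M ^ t)) s = Matrix.vecMul μ (resolventSeries M η) s := by
  simp only [Matrix.vecMul, dotProduct, resolventSeries, Finset.mul_sum, mul_left_comm _ (μ _)]
  rw [Summable.tsum_finsetSum fun k _ => (hs k s).mul_left _]
  simp [tsum_mul_left]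

/-- The expected advantage under another policy is a Bellman residual. -/
theorem sum_mul_Adv {S A : Type*} [Fintype S] [DecidableEq S] [Fintype A]
    (P : S → A → S → ℝ) (r : S → A → ℝ) (η : ℝ) (π : S → A → ℝ) {π' : S → A → ℝ}
    (hπ'1 : ∀ s, ∑ a, π' s a = 1) (s : S) :
    ∑ a, π' s a * Adv P r η π s a =
      (rvec r π' - (1 - η • Mmat P π').mulVec (Vval P r η π)) s := by
  have hM : (Mmat P π').mulVec (Vval P r η π) s =
      ∑ a, π' s a * ∑ s', P s a s' * Vval P r η π s' := by
    simp only [Matrix.mulVec, dotProduct, Mmat, Finset.sum_mul, Finset.mul_sum, mul_assoc]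
    exact Finset.sum_comm
  simp only [Adv, Qval, mul_sub, mul_add, Finset.sum_sub_distrib, Finset.sum_add_distrib,
    ← Finset.sum_mul, hπ'1, mul_left_comm _ η, ← Finset.mul_sum, ← hM, Matrix.sub_mulVec,
    Matrix.smul_mulVec, Matrix.one_mulVec, Pi.sub_apply, Pi.smul_apply, smul_eq_mul, rvec]
  ring

/-- Performance difference identity. -/
theorem performance_difference_identity
    {S A : Type*} [Fintype S] [DecidableEq S] [Fintype A] [Nonempty S] [Nonempty A]
    (P : S → A → S → ℝ) (hP0 : ∀ s a s', 0 ≤ P s a s') (hP1 : ∀ s a, ∑ s', P s a s' = 1)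
    (r : S → A → ℝ) (Rmax : ℝ) (hRmax : 0 ≤ Rmax) (hr : ∀ s a, |r s a| ≤ Rmax)
    (η : ℝ) (hη0 : 0 < η) (hη1 : η < 1)
    (π π' : S → A → ℝ)
    (hπ0 : ∀ s a, 0 ≤ π s a) (hπ1 : ∀ s, ∑ a, π s a = 1)
    (hπ'0 : ∀ s a, 0 ≤ π' s a) (hπ'1 : ∀ s, ∑ a, π' s a = 1)
    (μ : S → ℝ) (hμ0 : ∀ s, 0 ≤ μ s) (hμ1 : ∑ s, μ s = 1) :
    ∑ s, μ s * Vval P r η π' s - ∑ s, μ s * Vval P r η π s =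
      (1 / (1 - η)) * ∑ s, dvisit P η π' μ s * ∑ a, π' s a * Adv P r η π s a := by
  have hs := summable_pow_mul_pow_apply (Mmat_mem_rowStochastic hP0 hP1 hπ'0 hπ'1) hη0.le hη1
  have hη : 1 - η ≠ 0 := (sub_pos.mpr hη1).ne'
  set G := resolventSeries (Mmat P π') η
  have hV : Vval P r η π' = G.mulVec (rvec r π') := funext (tsum_pow_mul_mulVec hs _)
  have hd (s : S) : dvisit P η π' μ s = (1 - η) * Matrix.vecMul μ G s := by
    rw [dvisit, tsum_pow_mul_vecMul hs]
  simp only [hd, sum_mul_Adv P r η π hπ'1, mul_assoc, ← Finset.mul_sum]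
  rw [one_div, inv_mul_cancel_left₀ hη]
  change μ ⬝ᵥ Vval P r η π' - μ ⬝ᵥ Vval P r η π = Matrix.vecMul μ G ⬝ᵥ _
  rw [← Matrix.dotProduct_mulVec, Matrix.mulVec_sub, Matrix.mulVec_mulVec,
    resolventSeries_mul_one_sub hs, Matrix.one_mulVec, dotProduct_sub, hV]
end

section
/- Visitation distribution shift bound: let S be a nonempty finite type, let M and M' be row-stochastic S × S matrices (entrywise nonnegative with every row summing to 1) such that TV(M(s,·), M'(s,·)) ≤ δ for every s, let μ be a probability vector on S, and let 0 < η < 1. Define the discounted visitation distributions d(s) = (1−η)·∑_{t=0}^∞ η^t (μ M^t)(s) and d'(s) = (1−η)·∑_{t=0}^∞ η^t (μ M'^t)(s). Then TV(d, d') ≤ η·δ/(1−η). -/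
open scoped BigOperators

/-- A matrix whose rows have `ℓ¹` norm at most `c` scales the `ℓ¹` norm of a row vector by at
most `c`. -/
theorem sum_abs_vecMul_le {m n : Type*} [Fintype m] [Fintype n] (A : Matrix m n ℝ) {c : ℝ}
    (hA : ∀ i, ∑ j, |A i j| ≤ c) (v : m → ℝ) :
    ∑ j, |Matrix.vecMul v A j| ≤ c * ∑ i, |v i| := by
  calc ∑ j, |Matrix.vecMul v A j|
      ≤ ∑ j, ∑ i, |v i| * |A i j| := by
        refine Finset.sum_le_sum fun j _ => ?_
        simp only [Matrix.vecMul, dotProduct, ← abs_mul]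
        exact Finset.abs_sum_le_sum_abs _ _
    _ = ∑ i, |v i| * ∑ j, |A i j| := by
        rw [Finset.sum_comm]
        simp only [Finset.mul_sum]
    _ ≤ ∑ i, |v i| * c :=
        Finset.sum_le_sum fun i _ => mul_le_mul_of_nonneg_left (hA i) (abs_nonneg _)
    _ = c * ∑ i, |v i| := by rw [← Finset.sum_mul, mul_comm]

/-- Powers of a matrix with rows in the `ℓ¹` unit ball do not increase the `ℓ¹` norm. -/
theorem sum_abs_vecMul_pow_le {S : Type*} [Fintype S] [DecidableEq S] (A : Matrix S S ℝ)
    (hA : ∀ i, ∑ j, |A i j| ≤ 1) (v : S → ℝ) (t : ℕ) :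
    ∑ j, |Matrix.vecMul v (A ^ t) j| ≤ ∑ i, |v i| := by
  induction t with
  | zero => simp
  | succ t ih =>
    rw [pow_succ, ← Matrix.vecMul_vecMul]
    have := sum_abs_vecMul_le A hA (Matrix.vecMul v (A ^ t))
    linarith

/-- The `ℓ¹` distance between the `t`-step laws of two chains grows at most linearly in `t`. -/
theorem sum_abs_vecMul_pow_sub_le {S : Type*} [Fintype S] [DecidableEq S] (A B : Matrix S S ℝ)
    (hA : ∀ i, ∑ j, |A i j| ≤ 1) (hB : ∀ i, ∑ j, |B i j| ≤ 1) {c : ℝ} (hc : 0 ≤ c)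
    (hAB : ∀ i, ∑ j, |A i j - B i j| ≤ c) (v : S → ℝ) (t : ℕ) :
    ∑ j, |Matrix.vecMul v (A ^ t) j - Matrix.vecMul v (B ^ t) j| ≤ t * (c * ∑ i, |v i|) := by
  induction t with
  | zero => simp
  | succ t ih =>
    have hsplit : ∀ j, Matrix.vecMul v (A ^ (t + 1)) j - Matrix.vecMul v (B ^ (t + 1)) j =
        Matrix.vecMul (Matrix.vecMul v (A ^ t) - Matrix.vecMul v (B ^ t)) A j +
          Matrix.vecMul (Matrix.vecMul v (B ^ t)) (A - B) j := fun j => by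
      rw [pow_succ, pow_succ, ← Matrix.vecMul_vecMul, ← Matrix.vecMul_vecMul, Matrix.sub_vecMul,
        Matrix.vecMul_sub, Pi.sub_apply, Pi.sub_apply]
      ring
    have hstep := sum_abs_vecMul_le A hA (Matrix.vecMul v (A ^ t) - Matrix.vecMul v (B ^ t))
    have hdiff := sum_abs_vecMul_le (A - B) hAB (Matrix.vecMul v (B ^ t))
    have hpow := mul_le_mul_of_nonneg_left (sum_abs_vecMul_pow_le B hB v t) hc
    have htri : ∑ j, |Matrix.vecMul v (A ^ (t + 1)) j - Matrix.vecMul v (B ^ (t + 1)) j| ≤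
        ∑ j, |Matrix.vecMul (Matrix.vecMul v (A ^ t) - Matrix.vecMul v (B ^ t)) A j| +
          ∑ j, |Matrix.vecMul (Matrix.vecMul v (B ^ t)) (A - B) j| := by
      rw [← Finset.sum_add_distrib]
      exact Finset.sum_le_sum fun j _ => by rw [hsplit j]; exact abs_add_le _ _
    simp only [Pi.sub_apply] at hstep
    push_cast
    linarith

/-- The discounted series of the `t`-step laws converges. -/
theorem summable_geometric_mul_vecMul_pow {S : Type*} [Fintype S] [DecidableEq S]
    (A : Matrix S S ℝ) (hA : ∀ i, ∑ j, |A i j| ≤ 1) (v : S → ℝ) {η : ℝ} (hη0 : 0 ≤ η)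
    (hη1 : η < 1) (s : S) :
    Summable fun t : ℕ => η ^ t * Matrix.vecMul v (A ^ t) s := by
  refine Summable.of_norm_bounded
    ((summable_geometric_of_lt_one hη0 hη1).mul_right (∑ i, |v i|)) fun t => ?_
  rw [Real.norm_eq_abs, abs_mul, abs_of_nonneg (pow_nonneg hη0 t)]
  refine mul_le_mul_of_nonneg_left ?_ (pow_nonneg hη0 t)
  exact (Finset.single_le_sum (f := fun j => |Matrix.vecMul v (A ^ t) j|)
    (fun j _ => abs_nonneg _) (Finset.mem_univ s)).trans (sum_abs_vecMul_pow_le A hA v t)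

/-- Visitation distribution shift bound. -/
theorem visitation_distribution_shift_bound
    {S : Type*} [Fintype S] [DecidableEq S] [Nonempty S]
    (M M' : Matrix S S ℝ)
    (hM0 : ∀ s s', 0 ≤ M s s') (hM1 : ∀ s, ∑ s', M s s' = 1)
    (hM'0 : ∀ s s', 0 ≤ M' s s') (hM'1 : ∀ s, ∑ s', M' s s' = 1)
    (δ : ℝ) (hδ : 0 ≤ δ)
    (hrow : ∀ s, TV (fun s' => M s s') (fun s' => M' s s') ≤ δ)
    (μ : S → ℝ) (hμ0 : ∀ s, 0 ≤ μ s) (hμ1 : ∑ s, μ s = 1)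
    (η : ℝ) (hη0 : 0 < η) (hη1 : η < 1)
    (d d' : S → ℝ)
    (hd : ∀ s, d s = (1 - η) * ∑' t : ℕ, η ^ t * (Matrix.vecMul μ (M ^ t)) s)
    (hd' : ∀ s, d' s = (1 - η) * ∑' t : ℕ, η ^ t * (Matrix.vecMul μ (M' ^ t)) s) :
    TV d d' ≤ η * δ / (1 - η) := by
  have hM : ∀ i, ∑ j, |M i j| ≤ 1 := fun i => by simp only [abs_of_nonneg (hM0 i _), hM1, le_refl]
  have hM' : ∀ i, ∑ j, |M' i j| ≤ 1 := fun i => by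
    simp only [abs_of_nonneg (hM'0 i _), hM'1, le_refl]
  have hdist : ∀ i, ∑ j, |M i j - M' i j| ≤ 2 * δ := fun i => by
    have := hrow i
    simp only [TV] at this
    linarith
  have hμ : ∑ i, |μ i| = 1 := by simp only [abs_of_nonneg (hμ0 _), hμ1]
  have hpos : 0 < 1 - η := sub_pos.2 hη1
  obtain ⟨D, hD⟩ : ∃ D : ℕ → S → ℝ, ∀ t s, D t s =
      Matrix.vecMul μ (M ^ t) s - Matrix.vecMul μ (M' ^ t) s := ⟨_, fun _ _ => rfl⟩
  have hDsum : ∀ t, ∑ s, |D t s| ≤ t * (2 * δ) := fun t => by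
    simpa only [hD, hμ, mul_one] using
      sum_abs_vecMul_pow_sub_le M M' hM hM' (by positivity) hdist μ t
  have hsub : ∀ s, d s - d' s = (1 - η) * ∑' t : ℕ, η ^ t * D t s := fun s => by
    rw [hd, hd', ← mul_sub, ← Summable.tsum_sub
      (summable_geometric_mul_vecMul_pow M hM μ hη0.le hη1 s)
      (summable_geometric_mul_vecMul_pow M' hM' μ hη0.le hη1 s)]
    simp only [hD, mul_sub]
  have hgeo : HasSum (fun t : ℕ => (t : ℝ) * η ^ t * (2 * δ)) (η / (1 - η) ^ 2 * (2 * δ)) := by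
    have hnorm : ‖η‖ < 1 := by rwa [Real.norm_eq_abs, abs_of_pos hη0]
    exact (hasSum_coe_mul_geometric_of_norm_lt_one hnorm).mul_right (2 * δ)
  have hle : ∀ t, ∑ s, |η ^ t * D t s| ≤ (t : ℝ) * η ^ t * (2 * δ) := fun t => by
    simp only [abs_mul, abs_of_pos (pow_pos hη0 t), ← Finset.mul_sum]
    have := mul_le_mul_of_nonneg_left (hDsum t) (pow_pos hη0 t).le
    linarith
  have habs : ∀ s, Summable fun t : ℕ => |η ^ t * D t s| := fun s =>
    Summable.of_nonneg_of_le (fun t => abs_nonneg _)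
      (fun t => (Finset.single_le_sum (f := fun s => |η ^ t * D t s|)
        (fun _ _ => abs_nonneg _) (Finset.mem_univ s)).trans (hle t)) hgeo.summable
  have htotal : ∑ s, |∑' t : ℕ, η ^ t * D t s| ≤ η / (1 - η) ^ 2 * (2 * δ) :=
    calc ∑ s, |∑' t : ℕ, η ^ t * D t s|
        ≤ ∑ s, ∑' t : ℕ, |η ^ t * D t s| :=
          Finset.sum_le_sum fun s _ => by
            simpa only [Real.norm_eq_abs] using
              norm_tsum_le_tsum_norm (f := fun t : ℕ => η ^ t * D t s) (habs s)
      _ = ∑' t : ℕ, ∑ s, |η ^ t * D t s| :=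
          (Summable.tsum_finsetSum fun s _ => habs s).symm
      _ ≤ ∑' t : ℕ, (t : ℝ) * η ^ t * (2 * δ) :=
          Summable.tsum_le_tsum hle (summable_sum fun s _ => habs s) hgeo.summable
      _ = η / (1 - η) ^ 2 * (2 * δ) := hgeo.tsum_eq
  calc TV d d' = (1 / 2) * ((1 - η) * ∑ s, |∑' t : ℕ, η ^ t * D t s|) := by
        simp only [TV, hsub, abs_mul, abs_of_pos hpos, ← Finset.mul_sum]
    _ ≤ (1 / 2) * ((1 - η) * (η / (1 - η) ^ 2 * (2 * δ))) := by gcongr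
    _ = η * δ / (1 - η) := by field_simp
end
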